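/- Let f and m be integers with 3 ≤ m and m ∣ f. If some prime ℓ divides f, does not divide m, and satisfies ℓ ≡ 1 (mod m) (i.e. ℓ splits totally in the abelian field of conductor m), then the image of the Stickelberger element θ_f under the restriction map ℚ[(ℤ/fℤ)ˣ] → ℚ[(ℤ/mℤ)ˣ] is 0. -/

import Mathlib

open MonoidAlgebra Finset
open scoped Classical

/-- The class of a natural number `a` coprime to `m` in `(ℤ/mℤ)ˣ`
(junk value `1` when `a` is not invertible mod `m`). -/
noncomputable def unitOf (m a : ℕ) : (ZMod m)ˣ :=
  if h : IsUnit ((a : ZMod m)) then h.unit else 1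

/-- The Stickelberger element `θ_N = -∑_a (a/N - 1/2)·[a]⁻¹ ∈ ℚ[(ℤ/Nℤ)ˣ]`,
the sum running over the integers `1 ≤ a ≤ N` coprime to `N`. -/
noncomputable def stickelberger (N : ℕ) : MonoidAlgebra ℚ (ZMod N)ˣ :=
  ∑ a ∈ (Finset.Icc 1 N).filter (fun a => Nat.Coprime a N),
    MonoidAlgebra.single (unitOf N a)⁻¹ (-((a : ℚ) / N - 1 / 2))

lemma unitOf_congr (m a b : ℕ) (h : (a : ZMod m) = b) : unitOf m a = unitOf m b := by
  unfold unitOf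
  simp only [h]

lemma sum_blocks {M : Type*} [AddCommMonoid M] (g n : ℕ) (F : ℕ → M) :
    ∑ a ∈ range (g * n), F a = ∑ i ∈ range n, ∑ r ∈ range g, F (g * i + r) := by
  induction n with
  | zero => simp
  | succ n ih => rw [Nat.mul_succ, Finset.sum_range_add, ih, Finset.sum_range_succ]

lemma sum_lin (g n : ℕ) (hg : 0 < g) (hn : 0 < n) (r : ℕ) :
    ∑ i ∈ range n, (((g * i + r : ℕ) : ℚ) / ((g * n : ℕ) : ℚ) - 1 / 2) = (r : ℚ) / g - 1 / 2 := by
  have key : ∀ k : ℕ, ∑ i ∈ range k, (((g * i + r : ℕ) : ℚ) / ((g * n : ℕ) : ℚ) - 1 / 2)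
      = (g * (k * (k - 1) / 2) + k * r) / (g * n) - k / 2 := by
    intro k
    induction k with
    | zero => simp
    | succ k ih =>
      rw [Finset.sum_range_succ, ih]
      push_cast
      ring
  rw [key]
  have h1 : (g : ℚ) ≠ 0 := by positivity
  have h2 : (n : ℚ) ≠ 0 := by positivity
  field_simp
  ring

lemma sum_distrib {M : Type*} [AddCommGroup M] [Module ℚ M] (g n : ℕ) (hg : 0 < g) (hn : 0 < n)
    (w : ℕ → M) (hw : ∀ i r, w (g * i + r) = w r) :
    ∑ a ∈ range (g * n), ((a : ℚ) / ((g * n : ℕ) : ℚ) - 1 / 2) • w a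
      = ∑ r ∈ range g, ((r : ℚ) / g - 1 / 2) • w r := by
  rw [sum_blocks, Finset.sum_comm]
  refine Finset.sum_congr rfl fun r _ => ?_
  simp only [hw]
  rw [← Finset.sum_smul, sum_lin g n hg hn r]

lemma sum_multiples {M : Type*} [AddCommMonoid M] (l n : ℕ) (hl : 0 < l) (G : ℕ → M) :
    ∑ a ∈ range (l * n), (if l ∣ a then G a else 0) = ∑ b ∈ range n, G (l * b) := by
  rw [sum_blocks]
  refine Finset.sum_congr rfl fun i _ => ?_
  rw [Finset.sum_eq_single_of_mem 0 (by simpa using hl)]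
  · simp
  · intro r hr h0
    rw [if_neg]
    intro h
    have h' : l ∣ r := (Nat.dvd_add_right (Dvd.intro i rfl)).1 h
    exact absurd (Nat.le_of_dvd (Nat.pos_of_ne_zero h0) h') (by simpa using hr)

lemma map_unitOf (f m a : ℕ) (hdvd : m ∣ f) (ha : Nat.Coprime a f) :
    Units.map (ZMod.castHom hdvd (ZMod m)).toMonoidHom (unitOf f a) = unitOf m a := by
  have h1 : IsUnit (a : ZMod f) := (ZMod.isUnit_iff_coprime a f).2 ha
  have h2 : IsUnit (a : ZMod m) := (ZMod.isUnit_iff_coprime a m).2 (ha.coprime_dvd_right hdvd)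
  ext
  simp [unitOf, h1, h2]

/-- If some prime `ℓ` divides `f`, does not divide `m`, and satisfies `ℓ ≡ 1 (mod m)`
(total splitting in the abelian field of conductor `m`), then the image of `θ_f` under the
restriction map `ℚ[(ℤ/fℤ)ˣ] → ℚ[(ℤ/mℤ)ˣ]` vanishes. -/
theorem stickelberger_norm_eq_zero (f m : ℕ) (hm : 3 ≤ m) (hf : 3 ≤ f) (hdvd : m ∣ f)
    (ℓ : ℕ) (hℓ : ℓ.Prime) (hℓf : ℓ ∣ f) (hℓm : ¬ ℓ ∣ m) (hsplit : ℓ % m = 1) :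
    MonoidAlgebra.mapDomainRingHom ℚ
        (Units.map (ZMod.castHom hdvd (ZMod m)).toMonoidHom) (stickelberger f) = 0 := by
  obtain ⟨k, g, hg, hfg⟩ := Nat.exists_eq_pow_mul_and_not_dvd (n := f) (by omega) ℓ hℓ.ne_one
  have hg0 : 0 < g := Nat.pos_of_ne_zero (by rintro rfl; simp at hg)
  have hmg : m ∣ g := by
    have hc : Nat.Coprime m (ℓ ^ k) :=
      Nat.Coprime.pow_right k ((Nat.Prime.coprime_iff_not_dvd hℓ).2 hℓm).symm
    exact hc.dvd_of_dvd_mul_left (hfg ▸ hdvd)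
  obtain ⟨j, rfl⟩ : ∃ j, k = j + 1 := by
    refine Nat.exists_eq_succ_of_ne_zero ?_
    rintro rfl
    rw [pow_zero, one_mul] at hfg
    exact hg (hfg ▸ hℓf)
  have hℓ1 : (ℓ : ZMod m) = 1 := by
    have : ((ℓ % m : ℕ) : ZMod m) = ((1 : ℕ) : ZMod m) := by rw [hsplit]
    simpa using this
  have hcopf : ∀ a, Nat.Coprime a f ↔ (Nat.Coprime a g ∧ ¬ ℓ ∣ a) := by
    intro a
    rw [hfg, Nat.coprime_mul_iff_right, Nat.coprime_pow_right_iff (Nat.succ_pos j),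
      Nat.coprime_comm, Nat.Prime.coprime_iff_not_dvd hℓ, and_comm]
  set w : ℕ → MonoidAlgebra ℚ (ZMod m)ˣ := fun a =>
    if Nat.Coprime a g then MonoidAlgebra.single (unitOf m a)⁻¹ 1 else 0 with hwdef
  have hw : ∀ i r, w (g * i + r) = w r := by
    intro i r
    have h1 : Nat.Coprime (g * i + r) g ↔ Nat.Coprime r g := by simp
    have h2 : unitOf m (g * i + r) = unitOf m r := by
      apply unitOf_congr
      have : (g : ZMod m) = 0 := (ZMod.natCast_eq_zero_iff g m).2 hmg
      simp [this]
    simp only [hwdef, h1, h2]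
  have hwl : ∀ b, w (ℓ * b) = w b := by
    intro b
    have h1 : Nat.Coprime (ℓ * b) g ↔ Nat.Coprime b g := by
      rw [Nat.coprime_mul_iff_left]
      exact and_iff_right ((Nat.Prime.coprime_iff_not_dvd hℓ).2 hg)
    have h2 : unitOf m (ℓ * b) = unitOf m b := by
      apply unitOf_congr
      simp [hℓ1]
    simp only [hwdef, h1, h2]
  have hpos : 0 < ℓ := hℓ.pos
  have main : MonoidAlgebra.mapDomainRingHom ℚ
        (Units.map (ZMod.castHom hdvd (ZMod m)).toMonoidHom) (stickelberger f)
      = -(∑ a ∈ range f, (((a : ℚ) / f - 1 / 2) • w a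
          - if ℓ ∣ a then ((a : ℚ) / f - 1 / 2) • w a else 0)) := by
    have hset : (Finset.Icc 1 f).filter (fun a => Nat.Coprime a f)
        = (range f).filter (fun a => Nat.Coprime a f) := by
      ext a
      simp only [Finset.mem_filter, Finset.mem_Icc, Finset.mem_range]
      constructor
      · rintro ⟨⟨h1, h2⟩, h3⟩
        refine ⟨lt_of_le_of_ne h2 ?_, h3⟩
        rintro rfl
        rw [Nat.coprime_self] at h3
        omega
      · rintro ⟨h1, h3⟩
        refine ⟨⟨Nat.pos_of_ne_zero ?_, h1.le⟩, h3⟩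
        rintro rfl
        rw [Nat.coprime_zero_left] at h3
        omega
    rw [stickelberger, hset, map_sum, Finset.sum_filter, ← Finset.sum_neg_distrib]
    refine Finset.sum_congr rfl fun a _ => ?_
    by_cases hc : Nat.Coprime a f
    · obtain ⟨h1, h2⟩ := (hcopf a).1 hc
      rw [if_pos hc, if_neg h2, MonoidAlgebra.mapDomainRingHom_apply,
        MonoidAlgebra.mapDomain_single, map_inv, map_unitOf f m a hdvd hc]
      simp only [hwdef, if_pos h1, sub_zero, MonoidAlgebra.smul_single, smul_eq_mul, mul_one]
      rw [MonoidAlgebra.single_neg]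
    · rw [if_neg hc]
      by_cases h2 : ℓ ∣ a
      · simp [h2]
      · have h1 : ¬ Nat.Coprime a g := fun h => hc ((hcopf a).2 ⟨h, h2⟩)
        simp [hwdef, h1]
  rw [main, neg_eq_zero, Finset.sum_sub_distrib, sub_eq_zero]
  have e1 : f = g * ℓ ^ (j + 1) := by rw [hfg, mul_comm]
  have e2 : f = ℓ * (g * ℓ ^ j) := by rw [hfg]; ring
  have s1 : ∑ a ∈ range f, ((a : ℚ) / f - 1 / 2) • w a
      = ∑ r ∈ range g, ((r : ℚ) / g - 1 / 2) • w r := by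
    rw [e1]
    exact sum_distrib g _ hg0 (by positivity) w hw
  have s2 : ∑ a ∈ range f, (if ℓ ∣ a then ((a : ℚ) / f - 1 / 2) • w a else 0)
      = ∑ r ∈ range g, ((r : ℚ) / g - 1 / 2) • w r := by
    rw [← sum_distrib g (ℓ ^ j) hg0 (by positivity) w hw, e2, sum_multiples _ _ hpos]
    refine Finset.sum_congr rfl fun b _ => ?_
    rw [hwl, Nat.cast_mul, Nat.cast_mul ℓ, mul_div_mul_left _ _ (by positivity)]
  rw [s1, s2]
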